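/- arXiv:1506.04656 — 5 statements merged into one kernel-verified Lean document; each statement's English description precedes it below -/
import Mathlib

section
/- Let m ≥ 2, n ≥ 1, and A : ℕᵐ → Mat_n(ℝ). Define S = { y : ℕᵐ → ℝⁿ : y(t + 𝟏) = y(t) for all t ∈ ℕᵐ } and V = { x : ℕᵐ → ℝⁿ : x(t + 𝟏) = A(t)x(t) for all t ∈ ℕᵐ }, and define ψ : S → V by ψ(y)(t) = ( ∏_{k=1}^{μ(t)} A(t − k·𝟏) ) · y(t − μ(t)·𝟏) if μ(t) ≥ 1, and ψ(y)(t) = y(t) if μ(t) = 0, where the product is taken with indices k increasing from left to right. Then S and V are real vector subspaces of the space of functions ℕᵐ → ℝⁿ, ψ is well defined (its values lie in V), and ψ is an isomorphism of real vector spaces. -/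
/-!
Every point of `ι → ℕ` lies on exactly one diagonal ray `{b + k | k : ℕ}` starting at a point `b`
with some coordinate zero.  Along such a ray, `x (t + 1) = A t • x t` is an ordinary first order
recurrence, so a solution is the same thing as an arbitrary function on the set of starting points.
This holds for every `A`, and the diagonally periodic functions are the solutions for `A = 1`; the
isomorphism `ψ` matches the solutions of the two recurrences that have the same initial values.
-/

section Diagonal

variable {ι : Type*}

/-- The least coordinate of a point, written `μ t` in the paper.  For empty `ι` its value is `0`. -/
noncomputable def diagMin (t : ι → ℕ) : ℕ := ⨅ i, t i

/-- The starting point `t - μ t • 𝟏` of the diagonal ray through `t`. -/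
noncomputable def diagBase (t : ι → ℕ) : ι → ℕ := t - diagMin t

theorem diagMin_le (t : ι → ℕ) (i : ι) : diagMin t ≤ t i :=
  ciInf_le (OrderBot.bddBelow _) i

theorem diagBase_of_diagMin_eq_zero {t : ι → ℕ} (ht : diagMin t = 0) : diagBase t = t := by
  simp [diagBase, ht]

theorem diagBase_add_diagMin (t : ι → ℕ) : diagBase t + diagMin t = t :=
  tsub_add_cancel_of_le (diagMin_le t)

variable [Nonempty ι]

theorem diagMin_add_one (t : ι → ℕ) : diagMin (t + 1) = diagMin t + 1 := by
  obtain ⟨i, hi⟩ : ∃ i, t i = diagMin t := ciInf_mem t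
  apply le_antisymm
  · exact hi ▸ diagMin_le (t + 1) i
  · exact le_ciInf fun j => Nat.succ_le_succ (diagMin_le t j)

theorem diagBase_add_one (t : ι → ℕ) : diagBase (t + 1) = diagBase t := by
  simp only [diagBase, diagMin_add_one, Nat.cast_add_one, add_tsub_add_eq_tsub_right]

theorem diagMin_diagBase (t : ι → ℕ) : diagMin (diagBase t) = 0 := by
  obtain ⟨i, hi⟩ : ∃ i, t i = diagMin t := ciInf_mem t
  simpa [diagBase, hi] using diagMin_le (diagBase t) i

theorem diag_induction {p : (ι → ℕ) → Prop} (zero : ∀ t, diagMin t = 0 → p t)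
    (add_one : ∀ t, p t → p (t + 1)) (t : ι → ℕ) : p t := by
  have ray (k : ℕ) : p (diagBase t + k) := by
    induction k with
    | zero => simpa using zero _ (diagMin_diagBase t)
    | succ k ih => simpa [add_assoc] using add_one _ ih
  simpa only [diagBase_add_diagMin] using ray (diagMin t)

end Diagonal

section Transition

variable {ι G : Type*} [Monoid G]

/-- The ordered product `A (t - 𝟏) * A (t - 2 • 𝟏) * ⋯ * A (t - μ t • 𝟏)`, which carries the value
of a solution at `diagBase t` to its value at `t`. -/
noncomputable def transition (A : (ι → ℕ) → G) (t : ι → ℕ) : G :=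
  ((List.range (diagMin t)).map fun k : ℕ => A (t - (k + 1))).prod

theorem transition_of_diagMin_eq_zero (A : (ι → ℕ) → G) {t : ι → ℕ} (ht : diagMin t = 0) :
    transition A t = 1 := by
  simp [transition, ht]

theorem transition_add_one [Nonempty ι] (A : (ι → ℕ) → G) (t : ι → ℕ) :
    transition A (t + 1) = A t * transition A t := by
  simp [transition, diagMin_add_one, List.range_succ_eq_map, Function.comp_def,
    add_tsub_add_eq_tsub_right]

end Transition

section SolutionSpace

variable {ι G : Type*} (R M : Type*) [Monoid G] [Semiring R] [AddCommMonoid M] [Module R M]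
  [DistribMulAction G M] [SMulCommClass G R M]

/-- The space of solutions of the diagonal recurrence `x (t + 1) = A t • x t`.  Square matrices act
on vectors by `Matrix.mulVec`. -/
def solutionSpace (A : (ι → ℕ) → G) : Submodule R ((ι → ℕ) → M) where
  carrier := {x | ∀ t, x (t + 1) = A t • x t}
  add_mem' hx hy t := by simp only [Pi.add_apply, hx t, hy t, smul_add]
  zero_mem' t := (smul_zero (A t)).symm
  smul_mem' c x hx t := by simp only [Pi.smul_apply, hx t, smul_comm (A t) c]

variable {R M}

theorem mem_solutionSpace {A : (ι → ℕ) → G} {x : (ι → ℕ) → M} :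
    x ∈ solutionSpace R M A ↔ ∀ t, x (t + 1) = A t • x t :=
  Iff.rfl

theorem mem_solutionSpace_one {x : (ι → ℕ) → M} :
    x ∈ solutionSpace R M (1 : (ι → ℕ) → G) ↔ ∀ t, x (t + 1) = x t := by
  simp only [mem_solutionSpace, Pi.one_apply, one_smul]

variable [Nonempty ι]

theorem transition_smul_diagBase_of_mem_solutionSpace {A : (ι → ℕ) → G} {x : (ι → ℕ) → M}
    (hx : x ∈ solutionSpace R M A) (t : ι → ℕ) : transition A t • x (diagBase t) = x t := by
  induction t using diag_induction with
  | zero t ht => rw [transition_of_diagMin_eq_zero A ht, one_smul, diagBase_of_diagMin_eq_zero ht]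
  | add_one t ih => rw [transition_add_one, diagBase_add_one, mul_smul, ih, hx t]

variable (R M)

/-- A solution is determined by its values at the points with a zero coordinate, and these initial
values can be prescribed arbitrarily. -/
noncomputable def initialValueEquiv (A : (ι → ℕ) → G) :
    solutionSpace R M A ≃ₗ[R] ({t : ι → ℕ // diagMin t = 0} → M) where
  toFun x b := x.1 b
  map_add' _ _ := rfl
  map_smul' _ _ := rfl
  invFun z := ⟨fun t => transition A t • z ⟨diagBase t, diagMin_diagBase t⟩, fun t => by
    simp only [transition_add_one, diagBase_add_one, mul_smul]⟩
  left_inv x := Subtype.ext <| funext <| transition_smul_diagBase_of_mem_solutionSpace x.2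
  right_inv z := funext fun ⟨b, hb⟩ => by
    simp only [transition_of_diagMin_eq_zero A hb, diagBase_of_diagMin_eq_zero hb, one_smul]

/-- The isomorphism `ψ` of the paper: it sends a diagonally periodic function to the solution for
`A` with the same initial values. -/
noncomputable def periodicEquivSolution (A : (ι → ℕ) → G) :
    solutionSpace R M (1 : (ι → ℕ) → G) ≃ₗ[R] solutionSpace R M A :=
  (initialValueEquiv R M 1).trans (initialValueEquiv R M A).symm

theorem periodicEquivSolution_apply (A : (ι → ℕ) → G)
    (y : solutionSpace R M (1 : (ι → ℕ) → G)) (t : ι → ℕ) :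
    (periodicEquivSolution R M A y).1 t = transition A t • y.1 (diagBase t) :=
  rfl

theorem stmt_8_general (A : (ι → ℕ) → G) (μ : (ι → ℕ) → ℕ) (hμ : ∀ t, μ t = ⨅ i, t i) :
    ∃ S V : Submodule R ((ι → ℕ) → M),
      (S : Set ((ι → ℕ) → M)) = {y | ∀ t, y (t + 1) = y t} ∧
      (V : Set ((ι → ℕ) → M)) = {x | ∀ t, x (t + 1) = A t • x t} ∧
      ∃ ψ : S ≃ₗ[R] V, ∀ (y : S) (t : ι → ℕ),
        (ψ y : (ι → ℕ) → M) t =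
          if 1 ≤ μ t then
            ((List.range (μ t)).map fun k : ℕ => A (t - (k + 1))).prod • (y : (ι → ℕ) → M) (t - μ t)
          else (y : (ι → ℕ) → M) t := by
  obtain rfl : μ = diagMin := funext hμ
  refine ⟨solutionSpace R M (1 : (ι → ℕ) → G), solutionSpace R M A,
    Set.ext fun _ => mem_solutionSpace_one, rfl, periodicEquivSolution R M A, fun y t => ?_⟩
  rw [periodicEquivSolution_apply]
  split_ifs with ht
  · rfl
  · have ht : diagMin t = 0 := by omega
    rw [transition_of_diagMin_eq_zero A ht, one_smul, diagBase_of_diagMin_eq_zero ht]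

end SolutionSpace

/-- Proposition 2(a) of the paper.  `S` (diagonally periodic sequences) and `V`
(solutions of `x(t+𝟏) = A(t)x(t)`) are real vector subspaces of the space of
functions `ℕᵐ → ℝⁿ`, and the map `ψ` given by the ordered matrix product
formula is a well-defined linear isomorphism `S ≃ V`.  Here
`μ(t)` is the minimum of the components of `t`. -/
theorem stmt_8 (m n : ℕ) (hm : 2 ≤ m) (hn : 1 ≤ n)
    (A : (Fin m → ℕ) → Matrix (Fin n) (Fin n) ℝ)
    (μ : (Fin m → ℕ) → ℕ)
    (hμ : ∀ t : Fin m → ℕ,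
      μ t = Finset.univ.inf' ⟨⟨0, by omega⟩, Finset.mem_univ _⟩ t) :
    ∃ S V : Submodule ℝ ((Fin m → ℕ) → Fin n → ℝ),
      (S : Set ((Fin m → ℕ) → Fin n → ℝ)) =
        {y | ∀ t : Fin m → ℕ, y (fun i => t i + 1) = y t} ∧
      (V : Set ((Fin m → ℕ) → Fin n → ℝ)) =
        {x | ∀ t : Fin m → ℕ, x (fun i => t i + 1) = (A t).mulVec (x t)} ∧
      ∃ ψ : S ≃ₗ[ℝ] V,
        ∀ (y : S) (t : Fin m → ℕ),
          (ψ y : (Fin m → ℕ) → Fin n → ℝ) t =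
            if 1 ≤ μ t then
              (((List.range (μ t)).map
                  (fun k => A (fun i => t i - (k + 1)))).prod).mulVec
                ((y : (Fin m → ℕ) → Fin n → ℝ) (fun i => t i - μ t))
            else (y : (Fin m → ℕ) → Fin n → ℝ) t := by
  have : Nonempty (Fin m) := ⟨⟨0, by omega⟩⟩
  exact stmt_8_general ℝ (Fin n → ℝ) A μ fun t => (hμ t).trans (Finset.inf'_univ_eq_ciInf t)
end

section
/- Let m ≥ 2, n ≥ 1, and A : ℕᵐ → Mat_n(ℝ). Then the real vector space V = { x : ℕᵐ → ℝⁿ : x(t + 𝟏) = A(t)x(t) for all t ∈ ℕᵐ } is infinite dimensional. -/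
/-!
For an injection `σ : T → T`, the forward orbits of the points outside `range σ` are pairwise
disjoint copies of `ℕ`. A solution of `x (σ t) = A t (x t)` may therefore be prescribed arbitrarily
outside `range σ`, propagated along these orbits, and set to zero elsewhere. For the shift by `𝟏`
on `ℕᵐ`, the points outside the range are those with a zero coordinate, and there are infinitely
many of them as soon as `m ≥ 2`.
-/

theorem injective_iterate_compl_range {T : Type*} {σ : T → T} (hσ : σ.Injective) :
    Function.Injective fun p : ↥(Set.range σ)ᶜ × ℕ ↦ σ^[p.2] p.1 := by
  rintro ⟨s, k⟩ ⟨t, l⟩ h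
  induction k generalizing l with
  | zero =>
    cases l with
    | zero => exact Prod.ext (Subtype.ext h) rfl
    | succ l => exact absurd ⟨σ^[l] t, (h.trans (σ.iterate_succ_apply' l t)).symm⟩ s.2
  | succ k ih =>
    cases l with
    | zero => exact absurd ⟨σ^[k] s, (σ.iterate_succ_apply' k s).symm.trans h⟩ t.2
    | succ l =>
      simp only [Function.iterate_succ_apply'] at h
      obtain ⟨rfl, rfl⟩ := Prod.ext_iff.mp (ih l (hσ h))
      rfl

section Recurrence

variable {R M T : Type*} [Semiring R] [AddCommMonoid M] [Module R M]

/-- The solution space of the linear recurrence `x (σ t) = A t (x t)` along a self-map `σ` of an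
index type `T` that need not be ordered. -/
def recurrenceSolutions (σ : T → T) (A : T → Module.End R M) : Submodule R (T → M) where
  carrier := {x | ∀ t, x (σ t) = A t (x t)}
  add_mem' hx hy t := by simp only [Pi.add_apply, map_add, hx t, hy t]
  zero_mem' t := by simp only [Pi.zero_apply, map_zero]
  smul_mem' c x hx t := by simp only [Pi.smul_apply, map_smul, hx t]

/-- The operator `A (σ^[k-1] s) * ⋯ * A (σ s) * A s`, which takes the value at `s` of a solution of
the recurrence `x (σ t) = A t (x t)` to its value at `σ^[k] s`. -/
def recurrenceEvolution (σ : T → T) (A : T → Module.End R M) (s : T) : ℕ → Module.End R M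
  | 0 => 1
  | k + 1 => A (σ^[k] s) * recurrenceEvolution σ A s k

theorem exists_mem_recurrenceSolutions_extending {σ : T → T} (hσ : σ.Injective)
    (A : T → Module.End R M) (b : ↥(Set.range σ)ᶜ → M) :
    ∃ x ∈ recurrenceSolutions σ A, ∀ s : ↥(Set.range σ)ᶜ, x s = b s := by
  let orbitPoint : ↥(Set.range σ)ᶜ × ℕ → T := fun p ↦ σ^[p.2] p.1
  let x : T → M :=
    Function.extend orbitPoint (fun p ↦ recurrenceEvolution σ A p.1 p.2 (b p.1)) 0
  have x_orbit (s : ↥(Set.range σ)ᶜ) (k : ℕ) :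
      x (σ^[k] s) = recurrenceEvolution σ A s k (b s) :=
    (injective_iterate_compl_range hσ).extend_apply _ _ (s, k)
  have x_off_orbits {t : T} (ht : ¬∃ p, orbitPoint p = t) : x t = 0 :=
    Function.extend_apply' _ _ t ht
  refine ⟨x, fun t ↦ ?_, fun s ↦ x_orbit s 0⟩
  by_cases ht : ∃ p, orbitPoint p = t
  · obtain ⟨⟨s, k⟩, rfl⟩ := ht
    calc x (σ (σ^[k] s)) = x (σ^[k + 1] s) := by rw [σ.iterate_succ_apply']
      _ = A (σ^[k] s) (recurrenceEvolution σ A s k (b s)) := x_orbit s (k + 1)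
      _ = A (σ^[k] s) (x (σ^[k] s)) := by rw [x_orbit]
  · have hσt : ¬∃ p, orbitPoint p = σ t := by
      rintro ⟨⟨s, _ | k⟩, h⟩
      · exact s.2 ⟨t, h.symm⟩
      · exact ht ⟨(s, k), hσ ((σ.iterate_succ_apply' k s).symm.trans h)⟩
    rw [x_off_orbits hσt, x_off_orbits ht, map_zero]

end Recurrence

section Finiteness

variable {R M : Type*} [Ring R] [IsDomain R] [StrongRankCondition R]
  [AddCommGroup M] [Module R M] [Module.IsTorsionFree R M] [Nontrivial M]

theorem not_finite_pi_of_infinite (ι : Type*) [Infinite ι] : ¬Module.Finite R (ι → M) := by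
  classical
  intro _
  obtain ⟨v, hv⟩ := exists_ne (0 : M)
  exact Module.Finite.not_linearIndependent_of_infinite _
    (Pi.linearIndependent_single_of_ne_zero (R := R) fun _ : ι ↦ hv)

theorem stmt_9_general {T : Type*} {σ : T → T} (hσ : σ.Injective)
    (hrange : (Set.range σ)ᶜ.Infinite) (A : T → Module.End R M) :
    ¬Module.Finite R (recurrenceSolutions σ A) := by
  intro _
  have := hrange.to_subtype
  let restrict : recurrenceSolutions σ A →ₗ[R] ↥(Set.range σ)ᶜ → M :=
    LinearMap.funLeft R M Subtype.val ∘ₗ (recurrenceSolutions σ A).subtype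
  have restrict_surjective : Function.Surjective restrict := fun b ↦
    let ⟨x, hx, hxb⟩ := exists_mem_recurrenceSolutions_extending hσ A b
    ⟨⟨x, hx⟩, funext hxb⟩
  exact not_finite_pi_of_infinite _ (Module.Finite.of_surjective restrict restrict_surjective)

end Finiteness

section Shift

variable {ι : Type*}

theorem injective_add_one_pi : Function.Injective fun (t : ι → ℕ) i ↦ t i + 1 :=
  add_left_injective (1 : ι → ℕ)

theorem infinite_compl_range_add_one_pi [Nontrivial ι] :
    (Set.range fun (t : ι → ℕ) i ↦ t i + 1)ᶜ.Infinite := by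
  classical
  obtain ⟨i, j, hij⟩ := exists_pair_ne ι
  refine Set.infinite_of_injective_forall_mem (Pi.single_injective (M := fun _ ↦ ℕ) i) ?_
  rintro k ⟨t, ht⟩
  have : t j + 1 = 0 := (congrFun ht j).trans (Pi.single_eq_of_ne (M := fun _ ↦ ℕ) hij.symm k)
  exact Nat.succ_ne_zero _ this

end Shift

/-- Proposition 2(b) of the paper: the space `V` of solutions of
`x(t+𝟏) = A(t)x(t)` is an infinite dimensional real vector space. -/
theorem stmt_9 (m n : ℕ) (hm : 2 ≤ m) (hn : 1 ≤ n)
    (A : (Fin m → ℕ) → Matrix (Fin n) (Fin n) ℝ) :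
    ∃ V : Submodule ℝ ((Fin m → ℕ) → Fin n → ℝ),
      (V : Set ((Fin m → ℕ) → Fin n → ℝ)) =
        {x | ∀ t : Fin m → ℕ, x (fun i => t i + 1) = (A t).mulVec (x t)} ∧
      ¬ Module.Finite ℝ V := by
  have : Nontrivial (Fin m) := Fin.nontrivial_iff_two_le.mpr hm
  have : NeZero n := ⟨Nat.one_le_iff_ne_zero.mp hn⟩
  exact ⟨recurrenceSolutions (fun t i ↦ t i + 1) fun t ↦ (A t).mulVecLin, rfl,
    stmt_9_general injective_add_one_pi infinite_compl_range_add_one_pi _⟩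
end

section
/- Let m ≥ 2, n ≥ 1, and let v ∈ ℝⁿ with v ≠ 0. For each k ∈ ℕ* define y_k : ℕᵐ → ℝⁿ by y_k(t) = ((t¹ : ℤ) − (t² : ℤ))^k · v. Then each y_k satisfies y_k(t + 𝟏) = y_k(t) for all t ∈ ℕᵐ, and the family { y_k : k ∈ ℕ* } is linearly independent over ℝ in the space of functions ℕᵐ → ℝⁿ. -/
/-! Adding `𝟏` to `t` does not change `t a - t b`, so every function of this difference is
diagonally periodic. As the difference takes infinitely many values, a linear relation among its
powers is a polynomial with infinitely many roots, hence the zero polynomial; scaling a fixed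
vector `v ≠ 0` is injective and so preserves this independence. -/

open Function Polynomial Set

theorem transcendental_of_infinite_range {α R : Type*} [CommRing R] [IsDomain R] {f : α → R}
    (hf : (range f).Infinite) : Transcendental R f := by
  rw [transcendental_iff]
  intro p hp
  have hroot (x : α) : p.IsRoot (f x) := by
    rw [IsRoot, ← coe_aeval_eq_eval, ← aeval_fn_apply, hp, Pi.zero_apply]
  exact p.eq_zero_of_infinite_isRoot (hf.mono (range_subset_iff.mpr hroot))

theorem linearIndependent_pow_of_transcendental {R A : Type*} [CommRing R] [Ring A] [Algebra R A]
    {x : A} (hx : Transcendental R x) : LinearIndependent R fun k : ℕ ↦ x ^ k := by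
  have hinj : Injective (aeval (R := R) x) := transcendental_iff_injective.mp hx
  simpa [comp_def] using
    (basisMonomials R).linearIndependent.map_injOn (aeval x).toLinearMap hinj.injOn

theorem surjective_coord_sub {ι : Type*} {a b : ι} (hab : a ≠ b) :
    Surjective fun t : ι → ℕ ↦ (t a : ℤ) - t b := by
  classical
  intro z
  refine ⟨Pi.single a z.toNat + Pi.single b (-z).toNat, ?_⟩
  simp [hab, hab.symm]

section Module

variable {ι R V : Type*} [CommRing R] [AddCommGroup V] [Module R V]

theorem linearIndependent_smul_const {α κ : Type*} [IsDomain R] [Module.IsTorsionFree R V]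
    {w : κ → α → R} (hw : LinearIndependent R w) {v : V} (hv : v ≠ 0) :
    LinearIndependent R fun k x ↦ w k x • v :=
  hw.map_injOn ((LinearMap.toSpanSingleton R V v).compLeft α)
    (smul_left_injective R hv).comp_left.injOn

variable (R) in
/-- The multi-indexed sequence `y_k(t) = (t a - t b) ^ k • v`. The difference and its power are
taken in `ℤ` and then cast to the scalars `R`; `k = 0` gives the constant sequence `v`. -/
def coordSubPow (a b : ι) (v : V) (k : ℕ) (t : ι → ℕ) : V :=
  ((((t a : ℤ) - (t b : ℤ)) ^ k : ℤ) : R) • v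

theorem coordSubPow_periodic (a b : ι) (v : V) (k c : ℕ) :
    Periodic (coordSubPow R a b v k) (const ι c) := by
  intro t
  simp only [coordSubPow, Pi.add_apply, const_apply, Nat.cast_add, add_sub_add_right_eq_sub]

theorem linearIndependent_coordSubPow [IsDomain R] [CharZero R] [Module.IsTorsionFree R V]
    {a b : ι} (hab : a ≠ b) {v : V} (hv : v ≠ 0) :
    LinearIndependent R (coordSubPow R a b v) := by
  let d : (ι → ℕ) → R := fun t ↦ ((t a - t b : ℤ) : R)
  have hrange : (range d).Infinite := by
    have hcast : (range ((↑) : ℤ → R)).Infinite := infinite_range_of_injective Int.cast_injective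
    rwa [← (surjective_coord_sub hab).range_comp] at hcast
  have hpow : LinearIndependent R fun k : ℕ ↦ d ^ k :=
    linearIndependent_pow_of_transcendental (transcendental_of_infinite_range hrange)
  have hcoord : coordSubPow R a b v = fun k t ↦ (d ^ k) t • v := by
    funext k t
    rw [coordSubPow, Int.cast_pow, Pi.pow_apply]
  exact hcoord ▸ linearIndependent_smul_const hpow hv

theorem stmt_10_general [IsDomain R] [CharZero R] [Module.IsTorsionFree R V]
    {a b : ι} (hab : a ≠ b) {v : V} (hv : v ≠ 0) :
    (∀ k c : ℕ, Periodic (coordSubPow R a b v k) (const ι c)) ∧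
    LinearIndependent R (coordSubPow R a b v) :=
  ⟨coordSubPow_periodic a b v, linearIndependent_coordSubPow hab hv⟩

end Module

/-- The family `y_k(t) = ((t¹ : ℤ) − (t² : ℤ))^k • v`, `k ∈ ℕ*`, consists of
diagonally periodic sequences and is linearly independent over `ℝ`. -/
theorem stmt_10 (m n : ℕ) (hm : 2 ≤ m) (hn : 1 ≤ n)
    (v : Fin n → ℝ) (hv : v ≠ 0)
    (y : {k : ℕ // 0 < k} → (Fin m → ℕ) → Fin n → ℝ)
    (hy : ∀ (k : {k : ℕ // 0 < k}) (t : Fin m → ℕ),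
      y k t = (((((t ⟨0, by omega⟩ : ℕ) : ℤ) - ((t ⟨1, by omega⟩ : ℕ) : ℤ))
                  ^ (k : ℕ) : ℤ) : ℝ) • v) :
    (∀ (k : {k : ℕ // 0 < k}) (t : Fin m → ℕ), y k (fun i => t i + 1) = y k t) ∧
    LinearIndependent ℝ y := by
  obtain rfl : y = coordSubPow ℝ ⟨0, by omega⟩ ⟨1, by omega⟩ v ∘ Subtype.val :=
    funext₂ hy
  obtain ⟨hper, hind⟩ := stmt_10_general (R := ℝ)
    (a := (⟨0, by omega⟩ : Fin m)) (b := ⟨1, by omega⟩) (by simp) hv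
  exact ⟨fun k ↦ hper k 1, hind.comp _ Subtype.val_injective⟩
end

section
/- Let m ≥ 2 and a, b ∈ ℝ, and suppose the polynomial λ² + aλ + b has two distinct real roots λ₁ ≠ λ₂. Let f₁,…,f_m, g₁,…,g_m : ℕ^{m-1} → ℝ satisfy, for all α, β ∈ {1,…,m}, the compatibility conditions: f_α|_{t^β=0} = f_β|_{t^α=0}, g_α|_{t^β=1} = g_β|_{t^α=1}, and f_α|_{t^β=1} = g_β|_{t^α=0}, for all values of the remaining variables. Then the unique function x : ℕᵐ → ℝ satisfying x(t + 2·𝟏) + a·x(t + 𝟏) + b·x(t) = 0 for all t ∈ ℕᵐ, x(t)|_{t^γ=0} = f_γ and x(t)|_{t^γ=1} = g_γ for all γ ∈ {1,…,m}, is given, whenever μ(t) = t^β, by x(t) = ((λ₁^{t^β} − λ₂^{t^β})/(λ₁ − λ₂)) · g_β(t¹−t^β+1,…,t̂^β,…,tᵐ−t^β+1) − ((λ₂λ₁^{t^β} − λ₁λ₂^{t^β})/(λ₁ − λ₂)) · f_β(t¹−t^β,…,t̂^β,…,tᵐ−t^β). -/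
/-!
Every `t : ι → ℕ` is `s + n·𝟏` with `n = min t` and some `s β = 0`. Along the diagonal
`n ↦ s + n·𝟏` the equation is an ordinary two-term recurrence whose first two values are
prescribed on the hyperplanes `t β = 0` and `t β = 1`, so a solution is determined by the boundary
data. Conversely, solving along each diagonal defines a solution: the compatibility conditions make
the result independent of which coordinate attains the minimum. Distinct characteristic roots
`l1`, `l2` give the sequence along a diagonal in closed form.
-/

section TwoTermRecurrence

/-- The orbit of a two-term recurrence: the sequence `u` with `u 0 = p`, `u 1 = q` and
`u (n + 2) = Φ (u n) (u (n + 1))`. -/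
def twoTermSeq {V : Type*} (Φ : V → V → V) (p q : V) : ℕ → V
  | 0 => p
  | 1 => q
  | n + 2 => Φ (twoTermSeq Φ p q n) (twoTermSeq Φ p q (n + 1))

theorem eq_twoTermSeq {V : Type*} {Φ : V → V → V} {u : ℕ → V}
    (hu : ∀ n, u (n + 2) = Φ (u n) (u (n + 1))) (n : ℕ) :
    u n = twoTermSeq Φ (u 0) (u 1) n := by
  induction n using Nat.twoStepInduction with
  | zero => rfl
  | one => rfl
  | more n ih₀ ih₁ => rw [hu, twoTermSeq, ← ih₀, ← ih₁]

/-- The step `Φ` of the linear recurrence `u (n + 2) + a • u (n + 1) + b • u n = 0`; the older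
value `p = u n` is the first argument. -/
def linearStep {R V : Type*} [Semiring R] [AddCommGroup V] [Module R V] (a b : R) (p q : V) : V :=
  -(a • q + b • p)

theorem eq_linearStep_iff {R V : Type*} [Semiring R] [AddCommGroup V] [Module R V]
    {a b : R} {p q r : V} : r = linearStep a b p q ↔ r + a • q + b • p = 0 := by
  rw [linearStep, eq_neg_iff_add_eq_zero, add_assoc]

theorem twoTermSeq_linearStep_of_ne {K V : Type*} [Field K] [AddCommGroup V] [Module K V]
    {l1 l2 : K} (hne : l1 ≠ l2) (p q : V) (n : ℕ) :
    twoTermSeq (linearStep (-(l1 + l2)) (l1 * l2)) p q n =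
      ((l1 ^ n - l2 ^ n) / (l1 - l2)) • q - ((l2 * l1 ^ n - l1 * l2 ^ n) / (l1 - l2)) • p := by
  have hsub : l1 - l2 ≠ 0 := sub_ne_zero.mpr hne
  induction n using Nat.twoStepInduction with
  | zero =>
    have hcoeff : (l2 - l1) / (l1 - l2) = -1 := by rw [← neg_sub l1 l2, neg_div_self hsub]
    simp [twoTermSeq, hcoeff]
  | one => simp [twoTermSeq, hsub, mul_comm]
  | more n ih₀ ih₁ =>
    rw [twoTermSeq, ih₀, ih₁, linearStep]
    match_scalars <;> field_simp <;> ring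

end TwoTermRecurrence

section DiagonalRecurrence

variable {ι V : Type*}

/-- The equation `x (t + 2·𝟏) = Φ (x t) (x (t + 𝟏))` for a function on the lattice `ι → ℕ`. -/
def DiagonalRecurrence (Φ : V → V → V) (x : (ι → ℕ) → V) : Prop :=
  ∀ t : ι → ℕ, x (fun i => t i + 2) = Φ (x t) (x (fun i => t i + 1))

/-- For each `γ`, a function of the coordinates other than `γ`, to be used as the values of a
lattice function on a hyperplane `t γ = c`. -/
abbrev HyperplaneData (ι V : Type*) := (γ : ι) → ({i : ι // i ≠ γ} → ℕ) → V

/-- The function `x` takes the values `f γ` on each hyperplane `t γ = 0` and `g γ` on each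
hyperplane `t γ = 1`. -/
def HasBoundaryValues (f g : HyperplaneData ι V) (x : (ι → ℕ) → V) : Prop :=
  (∀ γ : ι, ∀ t : ι → ℕ, t γ = 0 → x t = f γ (fun i => t i.1)) ∧
  (∀ γ : ι, ∀ t : ι → ℕ, t γ = 1 → x t = g γ (fun i => t i.1))

/-- The data `f` on the hyperplanes `t γ = 0` and `g` on the hyperplanes `t γ = 1` agree wherever
two of these hyperplanes meet. -/
structure CompatibleBoundary (f g : HyperplaneData ι V) : Prop where
  zero_zero : ∀ α β : ι, ∀ t : ι → ℕ, t α = 0 → t β = 0 →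
    f α (fun i => t i.1) = f β (fun i => t i.1)
  one_one : ∀ α β : ι, ∀ t : ι → ℕ, t α = 1 → t β = 1 →
    g α (fun i => t i.1) = g β (fun i => t i.1)
  zero_one : ∀ α β : ι, ∀ t : ι → ℕ, t α = 0 → t β = 1 →
    f α (fun i => t i.1) = g β (fun i => t i.1)

/-- The value at `t` obtained from the boundary data at `t - (t β)·𝟏` and `t - (t β)·𝟏 + 𝟏` by
running the recurrence up the diagonal. It is meaningful when `t β` is the least coordinate of `t`;
otherwise the subtraction truncates. -/
def diagonalValue (Φ : V → V → V) (f g : HyperplaneData ι V) (β : ι) (t : ι → ℕ) : V :=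
  twoTermSeq Φ (f β (fun i => t i.1 - t β)) (g β (fun i => t i.1 - t β + 1)) (t β)

variable {Φ : V → V → V} {f g : HyperplaneData ι V} {x : (ι → ℕ) → V} {β γ : ι} {t : ι → ℕ}

theorem DiagonalRecurrence.eq_diagonalValue (hrec : DiagonalRecurrence Φ x)
    (hbdry : HasBoundaryValues f g x) (hβ : ∀ i, t β ≤ t i) :
    x t = diagonalValue Φ f g β t := by
  let s : ι → ℕ := fun i => t i - t β
  have hs : s β = 0 := Nat.sub_self _
  have hst : (fun i => s i + t β) = t := funext fun i => Nat.sub_add_cancel (hβ i)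
  have hdiag := eq_twoTermSeq (u := fun n => x (fun i => s i + n))
    (fun n => hrec (fun i => s i + n)) (t β)
  rwa [hst, hbdry.1 β (fun i => s i + 0) hs,
    hbdry.2 β (fun i => s i + 1) (congrArg (· + 1) hs)] at hdiag

theorem diagonalValue_of_eq_zero (h : t β = 0) :
    diagonalValue Φ f g β t = f β (fun i => t i.1) := by
  simp only [diagonalValue, h, twoTermSeq, Nat.sub_zero]

theorem diagonalValue_of_eq_one (hβ : ∀ i, t β ≤ t i) (h : t β = 1) :
    diagonalValue Φ f g β t = g β (fun i => t i.1) := by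
  have hcancel (i : ι) : t i - 1 + 1 = t i := Nat.sub_add_cancel (h ▸ hβ i)
  simp only [diagonalValue, h, twoTermSeq, hcancel]

theorem diagonalValue_add_two :
    diagonalValue Φ f g β (fun i => t i + 2) =
      Φ (diagonalValue Φ f g β t) (diagonalValue Φ f g β (fun i => t i + 1)) := by
  simp only [diagonalValue, Nat.add_sub_add_right, twoTermSeq]

theorem CompatibleBoundary.diagonalValue_eq (hfg : CompatibleBoundary f g)
    (hβ : ∀ i, t β ≤ t i) (hγ : ∀ i, t γ ≤ t i) :
    diagonalValue Φ f g β t = diagonalValue Φ f g γ t := by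
  have heq : t β = t γ := le_antisymm (hβ γ) (hγ β)
  have hf := hfg.zero_zero β γ (fun i => t i - t γ) (by simp [heq]) (by simp)
  have hg := hfg.one_one β γ (fun i => t i - t γ + 1) (by simp [heq]) (by simp)
  simp only [diagonalValue, heq, hf, hg]

variable [Nonempty ι]

/-- The function on `ι → ℕ` whose value at `t` is computed along the diagonal through `t`, using a
coordinate at which `t` is least. -/
noncomputable def diagonalExtension (Φ : V → V → V) (f g : HyperplaneData ι V) (t : ι → ℕ) : V :=
  diagonalValue Φ f g (Function.argmin t) t

theorem CompatibleBoundary.diagonalExtension_eq (hfg : CompatibleBoundary f g)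
    (hβ : ∀ i, t β ≤ t i) : diagonalExtension Φ f g t = diagonalValue Φ f g β t :=
  hfg.diagonalValue_eq (fun i => Function.argmin_le t i) hβ

theorem CompatibleBoundary.diagonalRecurrence_diagonalExtension (hfg : CompatibleBoundary f g) :
    DiagonalRecurrence Φ (diagonalExtension Φ f g) := by
  intro t
  have hmin (n : ℕ) (i : ι) : t (Function.argmin t) + n ≤ t i + n :=
    Nat.add_le_add_right (Function.argmin_le t i) n
  rw [hfg.diagonalExtension_eq (t := fun i => t i + 2) (hmin 2),
    hfg.diagonalExtension_eq (t := fun i => t i + 1) (hmin 1), hfg.diagonalExtension_eq (hmin 0)]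
  exact diagonalValue_add_two

theorem CompatibleBoundary.hasBoundaryValues_diagonalExtension (hfg : CompatibleBoundary f g) :
    HasBoundaryValues f g (diagonalExtension Φ f g) := by
  have hzero (γ : ι) (t : ι → ℕ) (hγ : t γ = 0) :
      diagonalExtension Φ f g t = f γ (fun i => t i.1) := by
    rw [hfg.diagonalExtension_eq fun i => hγ ▸ Nat.zero_le (t i), diagonalValue_of_eq_zero hγ]
  refine ⟨hzero, fun γ t hγ => ?_⟩
  by_cases hmeet : ∃ β, t β = 0
  · obtain ⟨β, hβ⟩ := hmeet
    rw [hzero β t hβ, hfg.zero_one β γ t hβ hγ]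
  · have hmin (i : ι) : t γ ≤ t i := hγ ▸ Nat.one_le_iff_ne_zero.mpr (not_exists.mp hmeet i)
    rw [hfg.diagonalExtension_eq hmin, diagonalValue_of_eq_one hmin hγ]

theorem CompatibleBoundary.existsUnique_diagonalRecurrence (hfg : CompatibleBoundary f g)
    (Φ : V → V → V) :
    ∃! x : (ι → ℕ) → V, DiagonalRecurrence Φ x ∧ HasBoundaryValues f g x :=
  ⟨diagonalExtension Φ f g,
    ⟨hfg.diagonalRecurrence_diagonalExtension, hfg.hasBoundaryValues_diagonalExtension⟩,
    fun _ hy => funext fun t => hy.1.eq_diagonalValue hy.2 fun i => Function.argmin_le t i⟩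

end DiagonalRecurrence

theorem stmt_14_general {ι K V : Type*} [Nonempty ι] [Field K] [AddCommGroup V] [Module K V]
    (a b : K) {f g : HyperplaneData ι V} (hfg : CompatibleBoundary f g) :
    (∃! x : (ι → ℕ) → V,
        (∀ t : ι → ℕ, x (fun i => t i + 2) + a • x (fun i => t i + 1) + b • x t = 0) ∧
        HasBoundaryValues f g x) ∧
    (∀ l1 l2 : K, l1 ≠ l2 → a = -(l1 + l2) → b = l1 * l2 → ∀ x : (ι → ℕ) → V,
        (∀ t : ι → ℕ, x (fun i => t i + 2) + a • x (fun i => t i + 1) + b • x t = 0) →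
        HasBoundaryValues f g x →
        ∀ β : ι, ∀ t : ι → ℕ, (∀ i, t β ≤ t i) →
          x t = ((l1 ^ t β - l2 ^ t β) / (l1 - l2)) • g β (fun i => t i.1 - t β + 1)
              - ((l2 * l1 ^ t β - l1 * l2 ^ t β) / (l1 - l2)) •
                  f β (fun i => t i.1 - t β)) := by
  simp only [← eq_linearStep_iff]
  refine ⟨hfg.existsUnique_diagonalRecurrence (linearStep a b), ?_⟩
  rintro l1 l2 hne rfl rfl x hrec hbdry β t hβ
  rw [DiagonalRecurrence.eq_diagonalValue hrec hbdry hβ, diagonalValue,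
    twoTermSeq_linearStep_of_ne hne]

/-- Theorem 2(i) of the paper: second order diagonal recurrence
`x(t+2·𝟏) + a x(t+𝟏) + b x(t) = 0` whose characteristic polynomial
`λ² + aλ + b` has distinct real roots `λ₁ ≠ λ₂`.  Boundary data `f γ, g γ` are
functions on `ℕ^{m-1}`, encoded as functions on `{i : Fin m // i ≠ γ} → ℕ`;
`μ(t) = t^β` is encoded as `∀ i, t β ≤ t i`. -/
theorem stmt_14 (m : ℕ) (hm : 2 ≤ m) (a b l1 l2 : ℝ) (hne : l1 ≠ l2)
    (ha : a = -(l1 + l2)) (hb : b = l1 * l2)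
    (f g : (γ : Fin m) → ({i : Fin m // i ≠ γ} → ℕ) → ℝ)
    (hff : ∀ α β : Fin m, ∀ t : Fin m → ℕ, t α = 0 → t β = 0 →
        f α (fun i => t i.1) = f β (fun i => t i.1))
    (hgg : ∀ α β : Fin m, ∀ t : Fin m → ℕ, t α = 1 → t β = 1 →
        g α (fun i => t i.1) = g β (fun i => t i.1))
    (hfg : ∀ α β : Fin m, ∀ t : Fin m → ℕ, t α = 0 → t β = 1 →
        f α (fun i => t i.1) = g β (fun i => t i.1)) :
    (∃! x : (Fin m → ℕ) → ℝ,
        (∀ t : Fin m → ℕ,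
            x (fun i => t i + 2) + a * x (fun i => t i + 1) + b * x t = 0) ∧
        (∀ γ : Fin m, ∀ t : Fin m → ℕ, t γ = 0 → x t = f γ (fun i => t i.1)) ∧
        (∀ γ : Fin m, ∀ t : Fin m → ℕ, t γ = 1 → x t = g γ (fun i => t i.1))) ∧
    (∀ x : (Fin m → ℕ) → ℝ,
        (∀ t : Fin m → ℕ,
            x (fun i => t i + 2) + a * x (fun i => t i + 1) + b * x t = 0) →
        (∀ γ : Fin m, ∀ t : Fin m → ℕ, t γ = 0 → x t = f γ (fun i => t i.1)) →
        (∀ γ : Fin m, ∀ t : Fin m → ℕ, t γ = 1 → x t = g γ (fun i => t i.1)) →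
        ∀ β : Fin m, ∀ t : Fin m → ℕ, (∀ i, t β ≤ t i) →
          x t = ((l1 ^ (t β) - l2 ^ (t β)) / (l1 - l2)) *
                  g β (fun i => t i.1 - t β + 1)
              - ((l2 * l1 ^ (t β) - l1 * l2 ^ (t β)) / (l1 - l2)) *
                  f β (fun i => t i.1 - t β)) := by
  have : Nonempty (Fin m) := ⟨⟨0, by omega⟩⟩
  have ⟨hexists, hformula⟩ := stmt_14_general a b (CompatibleBoundary.mk hff hgg hfg)
  exact ⟨hexists, fun x hrec hf hg => hformula l1 l2 hne ha hb x hrec ⟨hf, hg⟩⟩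
end

section
/- Let m ≥ 2 and a, b ∈ ℝ, and suppose the polynomial λ² + aλ + b has a double real root λ₁ (i.e., a = −2λ₁ and b = λ₁²). Let f₁,…,f_m, g₁,…,g_m : ℕ^{m-1} → ℝ satisfy, for all α, β ∈ {1,…,m}, the compatibility conditions: f_α|_{t^β=0} = f_β|_{t^α=0}, g_α|_{t^β=1} = g_β|_{t^α=1}, and f_α|_{t^β=1} = g_β|_{t^α=0}, for all values of the remaining variables. Then the unique function x : ℕᵐ → ℝ satisfying x(t + 2·𝟏) + a·x(t + 𝟏) + b·x(t) = 0 for all t ∈ ℕᵐ, x(t)|_{t^γ=0} = f_γ and x(t)|_{t^γ=1} = g_γ for all γ ∈ {1,…,m}, is given, whenever μ(t) = t^β ≥ 1, by x(t) = t^β λ₁^{t^β−1} · g_β(t¹−t^β+1,…,t̂^β,…,tᵐ−t^β+1) − (t^β−1) λ₁^{t^β} · f_β(t¹−t^β,…,t̂^β,…,tᵐ−t^β). -/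
/-!
The diagonals `s, s + 𝟏, s + 2·𝟏, …` with `min s = 0` partition the grid `ι → ℕ`, and the equation
only relates points of the same diagonal. It is therefore a family of independent one-variable
recurrences with a double root, whose initial values, at `s` and `s + 𝟏`, are boundary data.
Compatibility makes these initial values independent of which zero coordinate of `s` is used to
read them.
-/

section DoubleRoot

variable {R M : Type*} [CommRing R] [AddCommGroup M] [Module R M]

/-- The sequence `n l ^ (n - 1) v - (n - 1) l ^ n u`: the solution, with initial values `u` and `v`,
of the second order linear recurrence whose characteristic polynomial has the double root `l`.
Treating `n = 0` separately avoids the exponent `n - 1`. -/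
def doubleRootSol (l : R) (u v : M) : ℕ → M
  | 0 => u
  | n + 1 => ((n + 1 : R) * l ^ n) • v - ((n : R) * l ^ (n + 1)) • u

theorem doubleRootSol_one (l : R) (u v : M) : doubleRootSol l u v 1 = v := by
  simp [doubleRootSol]

theorem doubleRootSol_of_one_le (l : R) (u v : M) {n : ℕ} (hn : 1 ≤ n) :
    doubleRootSol l u v n = ((n : R) * l ^ (n - 1)) • v - (((n : R) - 1) * l ^ n) • u := by
  obtain ⟨k, rfl⟩ := Nat.exists_eq_add_of_le' hn
  simp [doubleRootSol]

theorem doubleRootSol_recurrence (l : R) (u v : M) (n : ℕ) :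
    doubleRootSol l u v (n + 2) + -(2 * l) • doubleRootSol l u v (n + 1)
      + l ^ 2 • doubleRootSol l u v n = 0 := by
  cases n <;> simp only [doubleRootSol] <;> push_cast <;> module

theorem eq_doubleRootSol {l : R} {y : ℕ → M}
    (hy : ∀ n, y (n + 2) + -(2 * l) • y (n + 1) + l ^ 2 • y n = 0) (n : ℕ) :
    y n = doubleRootSol l (y 0) (y 1) n := by
  induction n using Nat.twoStepInduction with
  | zero => rfl
  | one => exact (doubleRootSol_one l _ _).symm
  | more n ih ih' =>
    have h := (hy n).trans (doubleRootSol_recurrence l (y 0) (y 1) n).symm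
    rw [← ih, ← ih'] at h
    exact add_right_cancel (add_right_cancel h)

end DoubleRoot

section Diagonal

theorem iInf_eq_apply_of_forall_le {ι α : Type*} [ConditionallyCompleteLattice α] {t : ι → α}
    {β : ι} (ht : ∀ i, t β ≤ t i) : ⨅ i, t i = t β :=
  IsLeast.csInf_eq ⟨Set.mem_range_self β, Set.forall_mem_range.mpr ht⟩

variable {ι : Type*} [Nonempty ι]

theorem iInf_eq_apply_argmin (t : ι → ℕ) : ⨅ i, t i = t (Function.argmin t) :=
  iInf_eq_apply_of_forall_le fun i => Function.argmin_le t i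

theorem iInf_add_const (t : ι → ℕ) (n : ℕ) : ⨅ i, (t i + n) = (⨅ i, t i) + n := by
  rw [iInf_eq_apply_argmin t]
  exact iInf_eq_apply_of_forall_le fun i => Nat.add_le_add_right (Function.argmin_le t i) n

/-- The point with smallest coordinate `0` on the diagonal `{t + n·𝟏}` through `t`. -/
noncomputable def diagonalBase (t : ι → ℕ) : ι → ℕ := fun i => t i - ⨅ j, t j

theorem diagonalBase_add_const (t : ι → ℕ) (n : ℕ) :
    diagonalBase (fun i => t i + n) = diagonalBase t := by
  funext i
  simp only [diagonalBase, iInf_add_const, Nat.add_sub_add_right]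

end Diagonal

section DiagonalRecurrence

variable {ι R M : Type*} [CommRing R] [AddCommGroup M] [Module R M] {l : R}
  {f g : (γ : ι) → ({i : ι // i ≠ γ} → ℕ) → M} {x y : (ι → ℕ) → M}

/-- `x` solves the boundary value problem for the diagonal recurrence whose characteristic
polynomial has the double root `l`. The data on the faces `t γ = 0` and `t γ = 1` are `f γ` and
`g γ`, functions of the coordinates other than `γ`. -/
structure IsDiagonalSol (l : R) (f g : (γ : ι) → ({i : ι // i ≠ γ} → ℕ) → M)
    (x : (ι → ℕ) → M) : Prop where
  recurrence (t : ι → ℕ) :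
    x (fun i => t i + 2) + -(2 * l) • x (fun i => t i + 1) + l ^ 2 • x t = 0
  of_apply_eq_zero (γ : ι) (t : ι → ℕ) : t γ = 0 → x t = f γ (fun i => t i.1)
  of_apply_eq_one (γ : ι) (t : ι → ℕ) : t γ = 1 → x t = g γ (fun i => t i.1)

theorem IsDiagonalSol.apply_eq_doubleRootSol (hx : IsDiagonalSol l f g x) {β : ι} {t : ι → ℕ}
    (ht : ∀ i, t β ≤ t i) :
    x t = doubleRootSol l (f β fun i => t i.1 - t β) (g β fun i => t i.1 - t β + 1) (t β) := by
  let y (n : ℕ) : M := x fun i => t i - t β + n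
  have hy0 : y 0 = f β fun i => t i.1 - t β := hx.of_apply_eq_zero β _ (Nat.sub_self _)
  have hy1 : y 1 = g β fun i => t i.1 - t β + 1 := hx.of_apply_eq_one β _ (by simp)
  calc
    x t = y (t β) := congrArg x (funext fun i => (Nat.sub_add_cancel (ht i)).symm)
    _ = doubleRootSol l (y 0) (y 1) (t β) := eq_doubleRootSol (fun n => hx.recurrence _) _
    _ = doubleRootSol l (f β fun i => t i.1 - t β) (g β fun i => t i.1 - t β + 1) (t β) := by
      rw [hy0, hy1]

variable [Nonempty ι]

theorem IsDiagonalSol.unique (hx : IsDiagonalSol l f g x) (hy : IsDiagonalSol l f g y) :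
    x = y := by
  funext t
  have ht : ∀ i, t (Function.argmin t) ≤ t i := fun i => Function.argmin_le t i
  rw [hx.apply_eq_doubleRootSol ht, hy.apply_eq_doubleRootSol ht]

/-- The value at `t` of the data `f`, read off the face of a chosen smallest coordinate of `t`. -/
noncomputable def faceValue (f : (γ : ι) → ({i : ι // i ≠ γ} → ℕ) → M) (t : ι → ℕ) : M :=
  f (Function.argmin t) fun i => t i.1

/-- The solution of the boundary value problem `IsDiagonalSol l f g`, for compatible data: on each
diagonal, the one-variable solution whose initial values are the data at the base and one step
above it. -/
noncomputable def diagonalSol (l : R) (f g : (γ : ι) → ({i : ι // i ≠ γ} → ℕ) → M)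
    (t : ι → ℕ) : M :=
  doubleRootSol l (faceValue f (diagonalBase t)) (faceValue g fun i => diagonalBase t i + 1)
    (⨅ i, t i)

theorem diagonalSol_recurrence (l : R) (f g : (γ : ι) → ({i : ι // i ≠ γ} → ℕ) → M)
    (t : ι → ℕ) :
    diagonalSol l f g (fun i => t i + 2) + -(2 * l) • diagonalSol l f g (fun i => t i + 1)
      + l ^ 2 • diagonalSol l f g t = 0 := by
  simp only [diagonalSol, diagonalBase_add_const, iInf_add_const]
  exact doubleRootSol_recurrence l _ _ _

theorem diagonalSol_of_iInf_eq_zero {t : ι → ℕ} (ht : ⨅ i, t i = 0) :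
    diagonalSol l f g t = faceValue f t := by
  have hbase : diagonalBase t = t := by
    funext i
    simp only [diagonalBase, ht, Nat.sub_zero]
  rw [diagonalSol, ht, hbase, doubleRootSol]

theorem diagonalSol_of_iInf_eq_one {t : ι → ℕ} (ht : ⨅ i, t i = 1) :
    diagonalSol l f g t = faceValue g t := by
  have hbase : (fun i => diagonalBase t i + 1) = t := by
    funext i
    simp only [diagonalBase, ht, Nat.sub_add_cancel (ht.ge.trans (ciInf_le' t i))]
  rw [diagonalSol, ht, hbase, doubleRootSol_one]

theorem diagonalSol_of_apply_eq_zero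
    (hff : ∀ α β : ι, ∀ t : ι → ℕ, t α = 0 → t β = 0 →
      f α (fun i => t i.1) = f β (fun i => t i.1))
    {γ : ι} {t : ι → ℕ} (ht : t γ = 0) :
    diagonalSol l f g t = f γ (fun i => t i.1) := by
  have hmin : ⨅ i, t i = 0 := Nat.eq_zero_of_le_zero ((ciInf_le' t γ).trans_eq ht)
  rw [diagonalSol_of_iInf_eq_zero hmin]
  exact hff _ γ t ((iInf_eq_apply_argmin t).symm.trans hmin) ht

theorem diagonalSol_of_apply_eq_one
    (hgg : ∀ α β : ι, ∀ t : ι → ℕ, t α = 1 → t β = 1 →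
      g α (fun i => t i.1) = g β (fun i => t i.1))
    (hfg : ∀ α β : ι, ∀ t : ι → ℕ, t α = 0 → t β = 1 →
      f α (fun i => t i.1) = g β (fun i => t i.1))
    {γ : ι} {t : ι → ℕ} (ht : t γ = 1) :
    diagonalSol l f g t = g γ (fun i => t i.1) := by
  have hargmin := iInf_eq_apply_argmin t
  rcases Nat.le_one_iff_eq_zero_or_eq_one.mp ((ciInf_le' t γ).trans_eq ht) with hmin | hmin
  · rw [diagonalSol_of_iInf_eq_zero hmin]
    exact hfg _ γ t (hargmin.symm.trans hmin) ht
  · rw [diagonalSol_of_iInf_eq_one hmin]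
    exact hgg _ γ t (hargmin.symm.trans hmin) ht

theorem isDiagonalSol_diagonalSol (l : R)
    (hff : ∀ α β : ι, ∀ t : ι → ℕ, t α = 0 → t β = 0 →
      f α (fun i => t i.1) = f β (fun i => t i.1))
    (hgg : ∀ α β : ι, ∀ t : ι → ℕ, t α = 1 → t β = 1 →
      g α (fun i => t i.1) = g β (fun i => t i.1))
    (hfg : ∀ α β : ι, ∀ t : ι → ℕ, t α = 0 → t β = 1 →
      f α (fun i => t i.1) = g β (fun i => t i.1)) :
    IsDiagonalSol l f g (diagonalSol l f g) where
  recurrence := diagonalSol_recurrence l f g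
  of_apply_eq_zero _ _ := diagonalSol_of_apply_eq_zero hff
  of_apply_eq_one _ _ := diagonalSol_of_apply_eq_one hgg hfg

end DiagonalRecurrence

theorem stmt_15_general {ι R M : Type*} [Nonempty ι] [CommRing R] [AddCommGroup M] [Module R M]
    (a b l : R) (ha : a = -(2 * l)) (hb : b = l ^ 2)
    (f g : (γ : ι) → ({i : ι // i ≠ γ} → ℕ) → M)
    (hff : ∀ α β : ι, ∀ t : ι → ℕ, t α = 0 → t β = 0 →
        f α (fun i => t i.1) = f β (fun i => t i.1))
    (hgg : ∀ α β : ι, ∀ t : ι → ℕ, t α = 1 → t β = 1 →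
        g α (fun i => t i.1) = g β (fun i => t i.1))
    (hfg : ∀ α β : ι, ∀ t : ι → ℕ, t α = 0 → t β = 1 →
        f α (fun i => t i.1) = g β (fun i => t i.1)) :
    (∃! x : (ι → ℕ) → M,
        (∀ t : ι → ℕ,
            x (fun i => t i + 2) + a • x (fun i => t i + 1) + b • x t = 0) ∧
        (∀ γ : ι, ∀ t : ι → ℕ, t γ = 0 → x t = f γ (fun i => t i.1)) ∧
        (∀ γ : ι, ∀ t : ι → ℕ, t γ = 1 → x t = g γ (fun i => t i.1))) ∧
    (∀ x : (ι → ℕ) → M,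
        (∀ t : ι → ℕ,
            x (fun i => t i + 2) + a • x (fun i => t i + 1) + b • x t = 0) →
        (∀ γ : ι, ∀ t : ι → ℕ, t γ = 0 → x t = f γ (fun i => t i.1)) →
        (∀ γ : ι, ∀ t : ι → ℕ, t γ = 1 → x t = g γ (fun i => t i.1)) →
        ∀ β : ι, ∀ t : ι → ℕ, (∀ i, t β ≤ t i) → 1 ≤ t β →
          x t = ((t β : R) * l ^ (t β - 1)) • g β (fun i => t i.1 - t β + 1)
              - (((t β : R) - 1) * l ^ (t β)) • f β (fun i => t i.1 - t β)) := by
  subst ha hb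
  have hsol := isDiagonalSol_diagonalSol l hff hgg hfg
  refine ⟨⟨diagonalSol l f g, ⟨hsol.recurrence, hsol.of_apply_eq_zero, hsol.of_apply_eq_one⟩,
    fun y ⟨hy, hyf, hyg⟩ => IsDiagonalSol.unique ⟨hy, hyf, hyg⟩ hsol⟩, ?_⟩
  intro x hx hf hg β t ht hpos
  have hxsol : IsDiagonalSol l f g x := ⟨hx, hf, hg⟩
  rw [hxsol.apply_eq_doubleRootSol ht, doubleRootSol_of_one_le l _ _ hpos]

/-- Theorem 2(ii) of the paper: second order diagonal recurrence
`x(t+2·𝟏) + a x(t+𝟏) + b x(t) = 0` whose characteristic polynomial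
`λ² + aλ + b` has a double real root `λ₁`.  Boundary data `f γ, g γ` are
functions on `ℕ^{m-1}`, encoded as functions on `{i : Fin m // i ≠ γ} → ℕ`;
`μ(t) = t^β` is encoded as `∀ i, t β ≤ t i`. -/
theorem stmt_15 (m : ℕ) (hm : 2 ≤ m) (a b l1 : ℝ)
    (ha : a = -(2 * l1)) (hb : b = l1 ^ 2)
    (f g : (γ : Fin m) → ({i : Fin m // i ≠ γ} → ℕ) → ℝ)
    (hff : ∀ α β : Fin m, ∀ t : Fin m → ℕ, t α = 0 → t β = 0 →
        f α (fun i => t i.1) = f β (fun i => t i.1))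
    (hgg : ∀ α β : Fin m, ∀ t : Fin m → ℕ, t α = 1 → t β = 1 →
        g α (fun i => t i.1) = g β (fun i => t i.1))
    (hfg : ∀ α β : Fin m, ∀ t : Fin m → ℕ, t α = 0 → t β = 1 →
        f α (fun i => t i.1) = g β (fun i => t i.1)) :
    (∃! x : (Fin m → ℕ) → ℝ,
        (∀ t : Fin m → ℕ,
            x (fun i => t i + 2) + a * x (fun i => t i + 1) + b * x t = 0) ∧
        (∀ γ : Fin m, ∀ t : Fin m → ℕ, t γ = 0 → x t = f γ (fun i => t i.1)) ∧
        (∀ γ : Fin m, ∀ t : Fin m → ℕ, t γ = 1 → x t = g γ (fun i => t i.1))) ∧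
    (∀ x : (Fin m → ℕ) → ℝ,
        (∀ t : Fin m → ℕ,
            x (fun i => t i + 2) + a * x (fun i => t i + 1) + b * x t = 0) →
        (∀ γ : Fin m, ∀ t : Fin m → ℕ, t γ = 0 → x t = f γ (fun i => t i.1)) →
        (∀ γ : Fin m, ∀ t : Fin m → ℕ, t γ = 1 → x t = g γ (fun i => t i.1)) →
        ∀ β : Fin m, ∀ t : Fin m → ℕ, (∀ i, t β ≤ t i) → 1 ≤ t β →
          x t = (t β : ℝ) * l1 ^ (t β - 1) * g β (fun i => t i.1 - t β + 1)
              - ((t β : ℝ) - 1) * l1 ^ (t β) * f β (fun i => t i.1 - t β)) := by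
  have : NeZero m := ⟨by lia⟩
  exact stmt_15_general a b l1 ha hb f g hff hgg hfg
end
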